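/- arXiv:1701.07519 — 7 statements merged into one kernel-verified Lean document; each statement's English description precedes it below -/
import Mathlib

section
/- Block UDL decomposition: let g = [[A, B], [−conj(B), conj(A)]] be a complex 2N×2N block matrix with A, B ∈ M_N(ℂ) satisfying A A* − B B* = 1, A* A − Bᵀ conj(B) = 1, A* B = −Bᵀ conj(A), and B Aᵀ = −A Bᵀ. Then A is invertible and g = [[1, B·conj(A)⁻¹], [0, 1]] · [[(A*)⁻¹, 0], [0, conj(A)]] · [[1, 0], [−conj(A)⁻¹·conj(B), 1]]. -/
/-!
The relations say that `g = [[A, B], [C, D]]`, with `C = -conj B` and `D = conj A`, preserves the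
Hermitian form `η = diag(1, -1)`, so `η gᴴ η` is a left inverse of `g`, with first block row
`[Aᴴ, -Cᴴ]`. From `Aᴴ A = 1 + Cᴴ C > 0` and `Dᴴ D = 1 + Bᴴ B > 0` the diagonal blocks are
invertible, so `g` has a block UDL decomposition with the Schur complement `A - B D⁻¹ C` in the
middle factor. A left inverse of `g` restricts to one of the Schur complement, which is therefore
`(Aᴴ)⁻¹`.
-/

open Matrix

section Matrices

variable {l m n p α : Type*}

theorem conjTranspose_transpose_conjTranspose [InvolutiveStar α] (M : Matrix m n α) :
    Mᴴᵀᴴ = Mᵀ :=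
  congrArg transpose (conjTranspose_conjTranspose M)

theorem mul_schurComplement_of_mul_add_mul_eq_zero [Fintype m] [Fintype n] [DecidableEq n]
    [Ring α] {A : Matrix m p α} {B : Matrix m n α} {C : Matrix n p α} {D : Matrix n n α}
    [Invertible D] {L : Matrix l m α} {M : Matrix l n α} (h : L * B + M * D = 0) :
    L * (A - B * ⅟D * C) = L * A + M * C := by
  calc L * (A - B * ⅟D * C)
      = L * A - L * B * ⅟D * C := by simp only [Matrix.mul_sub, Matrix.mul_assoc]
    _ = L * A + M * D * ⅟D * C := by
      rw [eq_neg_of_add_eq_zero_left h, Matrix.neg_mul, Matrix.neg_mul, sub_neg_eq_add]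
    _ = L * A + M * C := by rw [Matrix.mul_invOf_cancel_right]

end Matrices

section RCLike

variable {m n 𝕜 : Type*} [Fintype m] [Fintype n] [DecidableEq m] [RCLike 𝕜]

open scoped ComplexOrder in
theorem isUnit_of_conjTranspose_mul_self_sub_eq_one {A : Matrix m m 𝕜} {C : Matrix n m 𝕜}
    (h : Aᴴ * A - Cᴴ * C = 1) : IsUnit A := by
  have hpos : (Aᴴ * A).PosDef := by
    rw [sub_eq_iff_eq_add.mp h]
    exact PosDef.one.add_posSemidef (posSemidef_conjTranspose_mul_self C)
  exact isUnit_of_mul_isUnit_right hpos.isUnit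

/-- The decomposition for the indefinite unitary group `U(p, q)`: the hypotheses are the blocks of
`gᴴ * η * g = η` for `g = fromBlocks A B C D` and `η = fromBlocks 1 0 0 (-1)`. -/
theorem soStar_UDL_general [DecidableEq n] {A : Matrix m m 𝕜} {B : Matrix m n 𝕜}
    {C : Matrix n m 𝕜} {D : Matrix n n 𝕜} (hAC : Aᴴ * A - Cᴴ * C = 1)
    (hBD : Dᴴ * D - Bᴴ * B = 1) (hAB : Aᴴ * B = Cᴴ * D) :
    IsUnit A ∧ IsUnit D ∧
      fromBlocks A B C D =
        fromBlocks 1 (B * D⁻¹) 0 1 * fromBlocks (Aᴴ)⁻¹ 0 0 D * fromBlocks 1 0 (D⁻¹ * C) 1 := by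
  have hD : IsUnit D := isUnit_of_conjTranspose_mul_self_sub_eq_one hBD
  refine ⟨isUnit_of_conjTranspose_mul_self_sub_eq_one hAC, hD, ?_⟩
  have := hD.invertible
  have hleft : Aᴴ * B + -Cᴴ * D = 0 := by rw [hAB, Matrix.neg_mul, add_neg_cancel]
  have hschur : (Aᴴ)⁻¹ = A - B * ⅟D * C := inv_eq_right_inv <| by
    rw [mul_schurComplement_of_mul_add_mul_eq_zero hleft, Matrix.neg_mul, ← sub_eq_add_neg, hAC]
  rw [hschur, ← invOf_eq_nonsing_inv]
  exact fromBlocks_eq_of_invertible₂₂ A B C D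

end RCLike

/-- **Block UDL decomposition of an element of SO*(2N).** If
`g = [[A, B], [−conj B, conj A]]` satisfies the four `SO*(2N)` relations, then `A` is
invertible and `g = [[1, B·conj(A)⁻¹],[0,1]] · [[(A*)⁻¹,0],[0,conj A]] · [[1,0],[−conj(A)⁻¹·conj B,1]]`.
Here `conj M = Mᴴᵀ` is the entrywise conjugate and `M* = Mᴴ`. -/
theorem soStar_UDL (N : ℕ) (A B : Matrix (Fin N) (Fin N) ℂ)
    (h1 : A * Aᴴ - B * Bᴴ = 1)
    (h2 : Aᴴ * A - Bᵀ * Bᴴᵀ = 1)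
    (h3 : Aᴴ * B = -(Bᵀ * Aᴴᵀ))
    (h4 : B * Aᵀ = -(A * Bᵀ)) :
    IsUnit A ∧
      Matrix.fromBlocks A B (-(Bᴴᵀ)) (Aᴴᵀ) =
        Matrix.fromBlocks 1 (B * (Aᴴᵀ)⁻¹) 0 1 *
          Matrix.fromBlocks (Aᴴ)⁻¹ 0 0 (Aᴴᵀ) *
          Matrix.fromBlocks 1 0 (-((Aᴴᵀ)⁻¹ * Bᴴᵀ)) 1 := by
  have hAC : Aᴴ * A - (-Bᴴᵀ)ᴴ * -Bᴴᵀ = 1 := by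
    simpa [conjTranspose_transpose_conjTranspose] using h2
  have hBD : Aᴴᵀᴴ * Aᴴᵀ - Bᴴ * B = 1 := by
    simpa [conjTranspose_transpose_conjTranspose] using congrArg transpose h2
  have hAB : Aᴴ * B = (-Bᴴᵀ)ᴴ * Aᴴᵀ := by
    simpa [conjTranspose_transpose_conjTranspose] using h3
  obtain ⟨hA, -, hUDL⟩ := soStar_UDL_general hAC hBD hAB
  exact ⟨hA, by rwa [Matrix.mul_neg] at hUDL⟩
end

section
/- Let g = [[A, B], [−conj(B), conj(A)]] ∈ SO*(2N) and let ζ ∈ M_N(ℂ) be antisymmetric (ζᵀ = −ζ) with 1 − ζ*ζ positive definite. Then the matrix −conj(B)·ζ + conj(A) is invertible, and g ▷ ζ := (Aζ + B)(−conj(B)ζ + conj(A))⁻¹ is again antisymmetric with 1 − (g ▷ ζ)*(g ▷ ζ) positive definite. -/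
open Matrix ComplexOrder

/-!
The graph of `ζ` is the column `Z = (ζ; 1)`, and `g * Z = (g ▷ ζ; 1) * D` with `D` the denominator
of the action. An element of `SO*(2N)` preserves the Hermitian form `diag(1, -1)` and the symmetric
bilinear form `[[0, 1], [1, 0]]`, whose values on `Z` are `ζᴴ * ζ - 1` and `ζᵀ + ζ`. Hence
`1 - ζᴴ * ζ` and `ζᵀ + ζ` are congruent through `D` to the same expressions in `g ▷ ζ`. Writing `C`
for the numerator, `D` is invertible because `Dᴴ * D - Cᴴ * C = 1 - ζᴴ * ζ` makes `Dᴴ * D` positive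
definite.
-/

open LieAlgebra.Orthogonal

theorem isUnit_of_posDef_conjTranspose_mul_self_sub {m n K : Type*} [Fintype m] [Fintype n]
    [DecidableEq n] [Field K] [PartialOrder K] [StarRing K] [StarOrderedRing K]
    {C : Matrix m n K} {D : Matrix n n K} (h : (Dᴴ * D - Cᴴ * C).PosDef) : IsUnit D := by
  have hD : (Dᴴ * D).PosDef := by
    simpa only [sub_add_cancel] using h.add_posSemidef (posSemidef_conjTranspose_mul_self C)
  exact isUnit_of_mul_isUnit_right hD.isUnit

section Forms

variable {m n R : Type*} [DecidableEq m] [DecidableEq n] [CommRing R]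

theorem indefiniteDiagonal_eq_fromBlocks :
    indefiniteDiagonal m n R = fromBlocks 1 0 0 (-1) := by
  rw [indefiniteDiagonal, ← diagonal_one, ← diagonal_one, diagonal_neg, fromBlocks_diagonal]

theorem J_mul_indefiniteDiagonal [Fintype n] :
    J n R * indefiniteDiagonal n n R = JD n R := by
  simp [J, JD, indefiniteDiagonal_eq_fromBlocks, fromBlocks_multiply]

theorem conjTranspose_fromRows_mul_indefiniteDiagonal_mul [Fintype m] [Fintype n] [StarRing R]
    (X : Matrix m n R) (Y : Matrix n n R) :
    (fromRows X Y)ᴴ * indefiniteDiagonal m n R * fromRows X Y = Xᴴ * X - Yᴴ * Y := by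
  rw [Matrix.mul_assoc, indefiniteDiagonal_eq_fromBlocks, fromBlocks_mul_fromRows,
    conjTranspose_fromRows_eq_fromCols_conjTranspose, fromCols_mul_fromRows]
  simp [sub_eq_add_neg]

theorem transpose_fromRows_mul_JD_mul [Fintype n] (X Y : Matrix n n R) :
    (fromRows X Y)ᵀ * JD n R * fromRows X Y = Xᵀ * Y + Yᵀ * X := by
  rw [Matrix.mul_assoc, JD, fromBlocks_mul_fromRows, transpose_fromRows, fromCols_mul_fromRows]
  simp

end Forms

section Moebius

variable {m n R : Type*} [Fintype m] [Fintype n] [CommRing R]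

/-- The numerator `A * ζ + B` of the fractional linear action of `g = [[A, B], [C, D]]` on
rectangular matrices. -/
def moebiusNum (g : Matrix (m ⊕ n) (m ⊕ n) R) (ζ : Matrix m n R) : Matrix m n R :=
  g.toBlocks₁₁ * ζ + g.toBlocks₁₂

/-- The denominator `C * ζ + D` of the fractional linear action of `g = [[A, B], [C, D]]` on
rectangular matrices. -/
def moebiusDenom (g : Matrix (m ⊕ n) (m ⊕ n) R) (ζ : Matrix m n R) : Matrix n n R :=
  g.toBlocks₂₁ * ζ + g.toBlocks₂₂

variable [DecidableEq n]

/-- The fractional linear action `g ▷ ζ = (A * ζ + B) * (C * ζ + D)⁻¹` of `g = [[A, B], [C, D]]`.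
It is meaningful only when the denominator is invertible, since `⁻¹` is `0` otherwise. -/
noncomputable def moebius (g : Matrix (m ⊕ n) (m ⊕ n) R) (ζ : Matrix m n R) : Matrix m n R :=
  moebiusNum g ζ * (moebiusDenom g ζ)⁻¹

/-- The column `(ζ; 1)`, whose columns span the graph of `ζ`. -/
def graphColumn (ζ : Matrix m n R) : Matrix (m ⊕ n) n R :=
  fromRows ζ 1

theorem mul_graphColumn (g : Matrix (m ⊕ n) (m ⊕ n) R) (ζ : Matrix m n R) :
    g * graphColumn ζ = fromRows (moebiusNum g ζ) (moebiusDenom g ζ) := by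
  conv_lhs => rw [← fromBlocks_toBlocks g, graphColumn, fromBlocks_mul_fromRows, Matrix.mul_one,
    Matrix.mul_one]
  rfl

theorem moebius_mul_moebiusDenom {g : Matrix (m ⊕ n) (m ⊕ n) R} {ζ : Matrix m n R}
    (hD : IsUnit (moebiusDenom g ζ)) : moebius g ζ * moebiusDenom g ζ = moebiusNum g ζ :=
  nonsing_inv_mul_cancel_right _ _ ((isUnit_iff_isUnit_det _).1 hD)

end Moebius

section PseudoUnitary

variable {m n R K : Type*} [Fintype m] [Fintype n] [DecidableEq m] [DecidableEq n]
  [CommRing R] [StarRing R]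
  [Field K] [PartialOrder K] [StarRing K] [StarOrderedRing K]

theorem conjTranspose_moebiusDenom_mul_self_sub {g : Matrix (m ⊕ n) (m ⊕ n) R}
    (hg : gᴴ * indefiniteDiagonal m n R * g = indefiniteDiagonal m n R) (ζ : Matrix m n R) :
    (moebiusDenom g ζ)ᴴ * moebiusDenom g ζ - (moebiusNum g ζ)ᴴ * moebiusNum g ζ =
      1 - ζᴴ * ζ := by
  rw [← neg_inj, neg_sub, neg_sub]
  calc
    _ = (g * graphColumn ζ)ᴴ * indefiniteDiagonal m n R * (g * graphColumn ζ) := by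
      rw [mul_graphColumn, conjTranspose_fromRows_mul_indefiniteDiagonal_mul]
    _ = (graphColumn ζ)ᴴ * (gᴴ * indefiniteDiagonal m n R * g) * graphColumn ζ := by
      simp only [conjTranspose_mul, Matrix.mul_assoc]
    _ = ζᴴ * ζ - 1 := by
      rw [hg, graphColumn, conjTranspose_fromRows_mul_indefiniteDiagonal_mul, conjTranspose_one,
        Matrix.mul_one]

theorem conjTranspose_moebiusDenom_mul_one_sub_mul {g : Matrix (m ⊕ n) (m ⊕ n) R} {ζ : Matrix m n R}
    (hg : gᴴ * indefiniteDiagonal m n R * g = indefiniteDiagonal m n R)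
    (hD : IsUnit (moebiusDenom g ζ)) :
    (moebiusDenom g ζ)ᴴ * (1 - (moebius g ζ)ᴴ * moebius g ζ) * moebiusDenom g ζ =
      1 - ζᴴ * ζ := by
  rw [← conjTranspose_moebiusDenom_mul_self_sub hg ζ, ← moebius_mul_moebiusDenom hD]
  simp only [conjTranspose_mul, Matrix.mul_sub, Matrix.sub_mul, Matrix.mul_one, Matrix.mul_assoc]

theorem isUnit_moebiusDenom {g : Matrix (m ⊕ n) (m ⊕ n) K} {ζ : Matrix m n K}
    (hg : gᴴ * indefiniteDiagonal m n K * g = indefiniteDiagonal m n K)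
    (hζ : (1 - ζᴴ * ζ).PosDef) : IsUnit (moebiusDenom g ζ) := by
  rw [← conjTranspose_moebiusDenom_mul_self_sub hg] at hζ
  exact isUnit_of_posDef_conjTranspose_mul_self_sub hζ

theorem posDef_one_sub_conjTranspose_moebius_mul_self {g : Matrix (m ⊕ n) (m ⊕ n) K}
    {ζ : Matrix m n K} (hg : gᴴ * indefiniteDiagonal m n K * g = indefiniteDiagonal m n K)
    (hζ : (1 - ζᴴ * ζ).PosDef) : (1 - (moebius g ζ)ᴴ * moebius g ζ).PosDef := by
  have hD := isUnit_moebiusDenom hg hζ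
  rwa [← hD.posDef_star_left_conjugate_iff, star_eq_conjTranspose,
    conjTranspose_moebiusDenom_mul_one_sub_mul hg hD]

end PseudoUnitary

section SplitOrthogonal

variable {n R : Type*} [Fintype n] [DecidableEq n] [CommRing R]

theorem transpose_moebiusDenom_mul_add_mul {g : Matrix (n ⊕ n) (n ⊕ n) R} {ζ : Matrix n n R}
    (hg : gᵀ * JD n R * g = JD n R) (hD : IsUnit (moebiusDenom g ζ)) :
    (moebiusDenom g ζ)ᵀ * ((moebius g ζ)ᵀ + moebius g ζ) * moebiusDenom g ζ = ζᵀ + ζ := by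
  calc
    _ = (moebiusNum g ζ)ᵀ * moebiusDenom g ζ + (moebiusDenom g ζ)ᵀ * moebiusNum g ζ := by
      rw [← moebius_mul_moebiusDenom hD, transpose_mul, Matrix.mul_add, Matrix.add_mul,
        Matrix.mul_assoc _ (moebius g ζ)]
    _ = (g * graphColumn ζ)ᵀ * JD n R * (g * graphColumn ζ) := by
      rw [mul_graphColumn, transpose_fromRows_mul_JD_mul]
    _ = (graphColumn ζ)ᵀ * (gᵀ * JD n R * g) * graphColumn ζ := by
      simp only [transpose_mul, Matrix.mul_assoc]
    _ = ζᵀ + ζ := by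
      rw [hg, graphColumn, transpose_fromRows_mul_JD_mul, transpose_one, Matrix.mul_one,
        Matrix.one_mul]

theorem transpose_moebius_eq_neg {g : Matrix (n ⊕ n) (n ⊕ n) R} {ζ : Matrix n n R}
    (hg : gᵀ * JD n R * g = JD n R) (hD : IsUnit (moebiusDenom g ζ)) (hζ : ζᵀ = -ζ) :
    (moebius g ζ)ᵀ = -moebius g ζ := by
  have hzero := transpose_moebiusDenom_mul_add_mul hg hD
  rw [hζ, neg_add_cancel, hD.mul_left_eq_zero,
    ((isUnit_transpose _).2 hD).mul_right_eq_zero] at hzero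
  exact eq_neg_of_add_eq_zero_left hzero

end SplitOrthogonal

section SOStar

variable {n R : Type*} [Fintype n] [DecidableEq n] [CommRing R] [StarRing R]
  {A B : Matrix n n R}

theorem conjTranspose_fromBlocks_mul_indefiniteDiagonal_mul
    (hAA : Aᴴ * A - Bᵀ * Bᴴᵀ = 1) (hAB : Aᴴ * B = -(Bᵀ * Aᴴᵀ)) :
    (fromBlocks A B (-Bᴴᵀ) Aᴴᵀ)ᴴ * indefiniteDiagonal n n R * fromBlocks A B (-Bᴴᵀ) Aᴴᵀ =
      indefiniteDiagonal n n R := by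
  have hBA : Bᴴ * A = -(Aᵀ * Bᴴᵀ) := by
    simpa [conjTranspose_transpose_eq_transpose_conjTranspose] using
      congrArg conjTranspose hAB
  have hBB : Bᴴ * B - Aᵀ * Aᴴᵀ = -1 := by
    rw [← neg_inj, neg_sub, neg_neg]
    simpa only [transpose_sub, transpose_mul, transpose_transpose, transpose_one] using
      congrArg transpose hAA
  rw [indefiniteDiagonal_eq_fromBlocks, fromBlocks_conjTranspose, fromBlocks_multiply,
    fromBlocks_multiply, fromBlocks_inj]
  simp [conjTranspose_transpose_eq_transpose_conjTranspose, ← sub_eq_add_neg, hAA, hAB, hBA, hBB]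

/-- The block shape means that the conjugate of `g` is `J * g * J⁻¹`; this is what turns invariance
of the Hermitian form into invariance of the bilinear form. -/
theorem transpose_fromBlocks_mul_JD (A B : Matrix n n R) :
    (fromBlocks A B (-Bᴴᵀ) Aᴴᵀ)ᵀ * JD n R =
      J n R * ((fromBlocks A B (-Bᴴᵀ) Aᴴᵀ)ᴴ * indefiniteDiagonal n n R) := by
  simp [JD, J, indefiniteDiagonal_eq_fromBlocks, fromBlocks_transpose, fromBlocks_conjTranspose,
    fromBlocks_multiply, conjTranspose_transpose_eq_transpose_conjTranspose]

theorem transpose_fromBlocks_mul_JD_mul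
    (hAA : Aᴴ * A - Bᵀ * Bᴴᵀ = 1) (hAB : Aᴴ * B = -(Bᵀ * Aᴴᵀ)) :
    (fromBlocks A B (-Bᴴᵀ) Aᴴᵀ)ᵀ * JD n R * fromBlocks A B (-Bᴴᵀ) Aᴴᵀ = JD n R := by
  rw [transpose_fromBlocks_mul_JD, Matrix.mul_assoc (J n R),
    conjTranspose_fromBlocks_mul_indefiniteDiagonal_mul hAA hAB, J_mul_indefiniteDiagonal]

end SOStar

theorem soStar_action_preserves_domain_general {n K : Type*} [Fintype n] [DecidableEq n]
    [Field K] [PartialOrder K] [StarRing K] [StarOrderedRing K]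
    {g : Matrix (n ⊕ n) (n ⊕ n) K} {ζ : Matrix n n K}
    (hherm : gᴴ * indefiniteDiagonal n n K * g = indefiniteDiagonal n n K)
    (hsymm : gᵀ * JD n K * g = JD n K) (hζ : ζᵀ = -ζ) (hpd : (1 - ζᴴ * ζ).PosDef) :
    IsUnit (moebiusDenom g ζ) ∧ (moebius g ζ)ᵀ = -moebius g ζ ∧
      (1 - (moebius g ζ)ᴴ * moebius g ζ).PosDef := by
  have hD := isUnit_moebiusDenom hherm hpd
  exact ⟨hD, transpose_moebius_eq_neg hsymm hD hζ,
    posDef_one_sub_conjTranspose_moebius_mul_self hherm hpd⟩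

/-- **The Möbius action of SO*(2N) preserves the bounded domain Ω_N.**
Let `g = [[A, B], [−conj B, conj A]] ∈ SO*(2N)` and `ζ` antisymmetric with
`1 − ζ*ζ` positive definite. Then `−conj(B)·ζ + conj(A)` is invertible, and
`g ▷ ζ = (Aζ + B)(−conj(B)ζ + conj(A))⁻¹` is antisymmetric with
`1 − (g ▷ ζ)*(g ▷ ζ)` positive definite. -/
theorem soStar_action_preserves_domain (N : ℕ) (A B ζ : Matrix (Fin N) (Fin N) ℂ)
    (h1 : A * Aᴴ - B * Bᴴ = 1)
    (h2 : Aᴴ * A - Bᵀ * Bᴴᵀ = 1)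
    (h3 : Aᴴ * B = -(Bᵀ * Aᴴᵀ))
    (h4 : B * Aᵀ = -(A * Bᵀ))
    (hζ : ζᵀ = -ζ) (hpd : (1 - ζᴴ * ζ).PosDef) :
    IsUnit (-(Bᴴᵀ) * ζ + Aᴴᵀ) ∧
    ((A * ζ + B) * (-(Bᴴᵀ) * ζ + Aᴴᵀ)⁻¹)ᵀ =
      -((A * ζ + B) * (-(Bᴴᵀ) * ζ + Aᴴᵀ)⁻¹) ∧
    (1 - ((A * ζ + B) * (-(Bᴴᵀ) * ζ + Aᴴᵀ)⁻¹)ᴴ *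
        ((A * ζ + B) * (-(Bᴴᵀ) * ζ + Aᴴᵀ)⁻¹)).PosDef := by
  exact soStar_action_preserves_domain_general
    (conjTranspose_fromBlocks_mul_indefiniteDiagonal_mul h2 h3)
    (transpose_fromBlocks_mul_JD_mul h2 h3) hζ hpd
end

section
/- Let ω, ζ ∈ Ω_N, and for η ∈ Ω_N set X_η := ((1 − ηη*)⁻¹)^{1/2} and g_η := [[X_η, η·conj(X_η)], [η*·X_η, conj(X_η)]]. Then g_ω⁻¹ g_ζ = [[X_ω(1 − ωζ*)X_ζ, X_ω(ζ − ω)conj(X_ζ)], [conj(X_ω)(ζ* − ω*)X_ζ, conj(X_ω)(1 − ω*ζ)conj(X_ζ)]]; in particular the matrix 1 − ω*ζ is invertible, so det(1 − ω*ζ) ≠ 0. -/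
open Matrix ComplexOrder

/-!
Since `g_η = [[1, η], [η*, 1]] · diag(X_η, conj X_η)`, the candidate inverse of `g_ω` is
`diag(X_ω, conj X_ω) · [[1, -ω], [-ω*, 1]]`. It is one because `X_ω (1 - ωω*) X_ω = 1`, together
with the entrywise conjugate of this identity: for antisymmetric `ω`, the conjugate of `1 - ωω*`
is `1 - ω*ω`. Multiplying by `g_ζ` gives the block formula, in which `X_ζ` and `conj X_ζ` merely
scale the columns. Finally, `1 - ω*ζ` is invertible because its Hermitian part is positive
definite: `2 - ω*ζ - ζ*ω = (1 - ω*ω) + (1 - ζ*ζ) + (ω - ζ)*(ω - ζ)`.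
-/

section BlockInverse

variable {m n p q R : Type*} [Fintype m] [Fintype n] [DecidableEq m] [DecidableEq n] [CommRing R]

theorem mul_mul_self_eq_one_of_mul_self_eq_inv {A X : Matrix n n R} (hA : IsUnit A)
    (hX : X * X = A⁻¹) : X * A * X = 1 := by
  have hXXA : X * (X * A) = 1 := by
    rw [← mul_assoc, hX, nonsing_inv_mul A ((isUnit_iff_isUnit_det A).1 hA)]
  exact mul_eq_one_comm.1 hXXA

theorem inv_fromBlocks_of_mul_one_sub_mul_eq_one {X : Matrix m m R} {Y : Matrix n n R}
    {a : Matrix m n R} {b : Matrix n m R} (hX : X * (1 - a * b) * X = 1)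
    (hY : Y * (1 - b * a) * Y = 1) :
    (fromBlocks X (a * Y) (b * X) Y)⁻¹ = fromBlocks X (-(X * a)) (-(Y * b)) Y := by
  apply inv_eq_left_inv
  rw [fromBlocks_multiply, ← fromBlocks_one, fromBlocks_inj]
  refine ⟨?_, ?_, ?_, ?_⟩
  · rw [← hX]
    simp only [Matrix.mul_sub, Matrix.sub_mul, Matrix.mul_one, Matrix.neg_mul, Matrix.mul_assoc,
      ← sub_eq_add_neg]
  · rw [Matrix.neg_mul, Matrix.mul_assoc, add_neg_cancel]
  · rw [Matrix.neg_mul, Matrix.mul_assoc, neg_add_cancel]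
  · rw [← hY]
    simp only [Matrix.mul_sub, Matrix.sub_mul, Matrix.mul_one, Matrix.neg_mul, Matrix.mul_assoc,
      neg_add_eq_sub]

theorem inv_fromBlocks_mul_fromBlocks {X : Matrix m m R} {Y : Matrix n n R}
    {a : Matrix m n R} {b : Matrix n m R} (hX : X * (1 - a * b) * X = 1)
    (hY : Y * (1 - b * a) * Y = 1)
    (c : Matrix m n R) (d : Matrix n m R) (Z : Matrix m p R) (W : Matrix n q R) :
    (fromBlocks X (a * Y) (b * X) Y)⁻¹ * fromBlocks Z (c * W) (d * Z) W =
      fromBlocks (X * (1 - a * d) * Z) (X * (c - a) * W)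
        (Y * (d - b) * Z) (Y * (1 - b * c) * W) := by
  rw [inv_fromBlocks_of_mul_one_sub_mul_eq_one hX hY, fromBlocks_multiply]
  simp only [Matrix.mul_sub, Matrix.sub_mul, Matrix.mul_one, Matrix.neg_mul, Matrix.mul_assoc,
    ← sub_eq_add_neg, neg_add_eq_sub]

end BlockInverse

section Conjugation

variable {n R : Type*} [Fintype n] [DecidableEq n] [CommRing R] [StarRing R] {ω : Matrix n n R}

theorem conj_one_sub_mul_conjTranspose_of_antisymm (hω : ωᵀ = -ω) :
    (1 - ω * ωᴴ)ᴴᵀ = 1 - ωᴴ * ω := by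
  have hωH : ωᴴᵀ = -ωᴴ := by
    rw [← conjTranspose_transpose_eq_transpose_conjTranspose, hω, conjTranspose_neg]
  rw [conjTranspose_sub, conjTranspose_one, conjTranspose_mul, conjTranspose_conjTranspose,
    transpose_sub, transpose_one, transpose_mul, hω, hωH, neg_mul_neg]

theorem conj_mul_one_sub_mul_conj_eq_one {X : Matrix n n R} (hω : ωᵀ = -ω)
    (hX : X * (1 - ω * ωᴴ) * X = 1) : Xᴴᵀ * (1 - ωᴴ * ω) * Xᴴᵀ = 1 := by
  calc Xᴴᵀ * (1 - ωᴴ * ω) * Xᴴᵀ = (X * (1 - ω * ωᴴ) * X)ᴴᵀ := by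
        rw [← conj_one_sub_mul_conjTranspose_of_antisymm hω]
        simp only [conjTranspose_mul, transpose_mul, mul_assoc]
    _ = 1 := by rw [hX, conjTranspose_one, transpose_one]

end Conjugation

section Invertibility

variable {m n K : Type*} [Fintype n] [DecidableEq n] [Field K] [PartialOrder K] [StarRing K]

theorem isUnit_of_posDef_add_conjTranspose {M : Matrix n n K} (h : (M + Mᴴ).PosDef) :
    IsUnit M := by
  rw [← mulVec_injective_iff_isUnit]
  refine (injective_iff_map_eq_zero M.mulVecLin).2 fun v hv => ?_
  rw [mulVecLin_apply] at hv
  by_contra hv0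
  have hform : star v ⬝ᵥ ((M + Mᴴ) *ᵥ v) = 0 := by
    rw [add_mulVec, hv, zero_add, dotProduct_mulVec, ← star_mulVec, hv, star_zero,
      zero_dotProduct]
  exact (h.dotProduct_mulVec_pos hv0).ne' hform

theorem isUnit_one_sub_conjTranspose_mul [StarOrderedRing K] [Fintype m] {ω ζ : Matrix m n K}
    (hω : (1 - ωᴴ * ω).PosDef) (hζ : (1 - ζᴴ * ζ).PosSemidef) : IsUnit (1 - ωᴴ * ζ) := by
  apply isUnit_of_posDef_add_conjTranspose
  have hdecomp : (1 - ωᴴ * ζ) + (1 - ωᴴ * ζ)ᴴ =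
      (1 - ωᴴ * ω) + (1 - ζᴴ * ζ) + (ω - ζ)ᴴ * (ω - ζ) := by
    simp only [conjTranspose_sub, conjTranspose_one, conjTranspose_mul,
      conjTranspose_conjTranspose, Matrix.mul_sub, Matrix.sub_mul]
    abel
  rw [hdecomp]
  exact (hω.add_posSemidef hζ).add_posSemidef (posSemidef_conjTranspose_mul_self _)

theorem isUnit_one_sub_mul_conjTranspose [Fintype m] [DecidableEq m] {ω : Matrix m n K}
    (hω : (1 - ωᴴ * ω).PosDef) : IsUnit (1 - ω * ωᴴ) := by
  rw [isUnit_iff_isUnit_det, det_one_sub_mul_comm, ← isUnit_iff_isUnit_det]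
  exact hω.isUnit

end Invertibility

/-- `Z` and `W` take the places of `X_ζ` and `conj X_ζ`. -/
theorem soStar_gInv_mul_g_general {n K : Type*} [Fintype n] [DecidableEq n] [Field K]
    [PartialOrder K] [StarRing K] [StarOrderedRing K] {ω ζ X : Matrix n n K} (hω : ωᵀ = -ω)
    (hpdω : (1 - ωᴴ * ω).PosDef) (hpsdζ : (1 - ζᴴ * ζ).PosSemidef)
    (hX : X * X = (1 - ω * ωᴴ)⁻¹) (Z W : Matrix n n K) :
    (fromBlocks X (ω * Xᴴᵀ) (ωᴴ * X) Xᴴᵀ)⁻¹ * fromBlocks Z (ζ * W) (ζᴴ * Z) W =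
      fromBlocks (X * (1 - ω * ζᴴ) * Z) (X * (ζ - ω) * W)
        (Xᴴᵀ * (ζᴴ - ωᴴ) * Z) (Xᴴᵀ * (1 - ωᴴ * ζ) * W) ∧
    IsUnit (1 - ωᴴ * ζ) ∧ (1 - ωᴴ * ζ).det ≠ 0 := by
  have hXX : X * (1 - ω * ωᴴ) * X = 1 :=
    mul_mul_self_eq_one_of_mul_self_eq_inv (isUnit_one_sub_mul_conjTranspose hpdω) hX
  have hunit : IsUnit (1 - ωᴴ * ζ) := isUnit_one_sub_conjTranspose_mul hpdω hpsdζ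
  exact ⟨inv_fromBlocks_mul_fromBlocks hXX (conj_mul_one_sub_mul_conj_eq_one hω hXX) ζ ζᴴ Z W,
    hunit, ((isUnit_iff_isUnit_det _).1 hunit).ne_zero⟩

/-- **Block form of `g_ω⁻¹ g_ζ`.** For `ω, ζ ∈ Ω_N` with positive-definite square roots
`X_ω, X_ζ` of `(1 − ωω*)⁻¹, (1 − ζζ*)⁻¹` and
`g_η = [[X_η, η·conj X_η], [η*·X_η, conj X_η]]`, we have
`g_ω⁻¹ g_ζ = [[X_ω(1 − ωζ*)X_ζ, X_ω(ζ − ω)conj X_ζ],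
[conj X_ω (ζ* − ω*) X_ζ, conj X_ω (1 − ω*ζ) conj X_ζ]]`; in particular `1 − ω*ζ` is
invertible and `det(1 − ω*ζ) ≠ 0`. -/
theorem soStar_gInv_mul_g (N : ℕ) (ω ζ Xω Xζ : Matrix (Fin N) (Fin N) ℂ)
    (hω : ωᵀ = -ω) (hpdω : (1 - ωᴴ * ω).PosDef)
    (hζ : ζᵀ = -ζ) (hpdζ : (1 - ζᴴ * ζ).PosDef)
    (hXω : Xω.PosDef) (hXω2 : Xω * Xω = (1 - ω * ωᴴ)⁻¹)
    (hXζ : Xζ.PosDef) (hXζ2 : Xζ * Xζ = (1 - ζ * ζᴴ)⁻¹) :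
    (Matrix.fromBlocks Xω (ω * Xωᴴᵀ) (ωᴴ * Xω) (Xωᴴᵀ))⁻¹ *
        Matrix.fromBlocks Xζ (ζ * Xζᴴᵀ) (ζᴴ * Xζ) (Xζᴴᵀ) =
      Matrix.fromBlocks (Xω * (1 - ω * ζᴴ) * Xζ) (Xω * (ζ - ω) * Xζᴴᵀ)
        (Xωᴴᵀ * (ζᴴ - ωᴴ) * Xζ) (Xωᴴᵀ * (1 - ωᴴ * ζ) * Xζᴴᵀ) ∧
    IsUnit (1 - ωᴴ * ζ) ∧ (1 - ωᴴ * ζ).det ≠ 0 :=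
  soStar_gInv_mul_g_general hω hpdω hpdζ.posSemidef hXω2 Xζ Xζᴴᵀ
end

section
/- Let ω, ζ ∈ Ω_N. Then det(1 − ζ*ζ) and det(1 − ω*ω) are positive real numbers, det(1 − ω*ζ) ≠ 0, and det( sqrt(1 − ζζ*) · (1 − ζω*)⁻¹ · sqrt(1 − ωω*) ) = det(1 − ζ*ζ)^{1/2} · det(1 − ω*ω)^{1/2} / det(1 − ω*ζ), where sqrt denotes the unique positive-definite square root and the real square roots on the right are the positive ones. -/
open Matrix ComplexOrder

/-!
For strict contractions `ω` and `ζ`, the Hermitian part of `1 - ω*ζ` is positive definite, since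
`(1 - ω*ζ) + (1 - ω*ζ)* = (1 - ω*ω) + (1 - ζ*ζ) + (ω - ζ)*(ω - ζ)`; so `1 - ω*ζ` is nonsingular.
By Sylvester's identity `det (1 - AB) = det (1 - BA)`, the square roots of `1 - ζζ*` and `1 - ωω*`
have determinants `det (1 - ζ*ζ)^{1/2}` and `det (1 - ω*ω)^{1/2}`, and the overlap formula follows
from multiplicativity of the determinant.
-/

section OrderedDomain

variable {R m n : Type*} [CommRing R] [IsDomain R] [PartialOrder R] [StarRing R] [Fintype n]
  [DecidableEq n]

theorem det_ne_zero_of_posDef_add_conjTranspose {A : Matrix n n R} (hA : (A + Aᴴ).PosDef) :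
    A.det ≠ 0 := by
  intro hdet
  obtain ⟨v, hv, hAv⟩ := exists_mulVec_eq_zero_iff.mpr hdet
  have hquad : star v ⬝ᵥ (A + Aᴴ) *ᵥ v = 0 := by
    rw [add_mulVec, hAv, zero_add, dotProduct_mulVec, ← star_mulVec, hAv, star_zero,
      zero_dotProduct]
  exact (hA.dotProduct_mulVec_pos hv).ne' hquad

theorem det_one_sub_conjTranspose_mul_ne_zero [StarOrderedRing R] [Fintype m] {X Y : Matrix m n R}
    (hX : (1 - Xᴴ * X).PosDef) (hY : (1 - Yᴴ * Y).PosDef) : (1 - Xᴴ * Y).det ≠ 0 := by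
  have hermitian_part : (1 - Xᴴ * Y) + (1 - Xᴴ * Y)ᴴ =
      (1 - Xᴴ * X) + (1 - Yᴴ * Y) + (X - Y)ᴴ * (X - Y) := by
    simp only [conjTranspose_sub, conjTranspose_mul, conjTranspose_conjTranspose,
      conjTranspose_one, Matrix.sub_mul, Matrix.mul_sub]
    abel
  apply det_ne_zero_of_posDef_add_conjTranspose
  rw [hermitian_part]
  exact (hX.add hY).add_posSemidef (posSemidef_conjTranspose_mul_self _)

end OrderedDomain

section RCLike

variable {𝕜 m n : Type*} [RCLike 𝕜] [Fintype m] [DecidableEq m] [Fintype n] [DecidableEq n]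

theorem exists_pos_det_eq_sq_of_posDef {A : Matrix n n 𝕜} (hA : A.PosDef) :
    ∃ r : ℝ, 0 < r ∧ A.det = ((r ^ 2 : ℝ) : 𝕜) := by
  obtain ⟨x, hx, hxA⟩ := RCLike.pos_iff_exists_ofReal.mp hA.det_pos
  exact ⟨√x, Real.sqrt_pos.mpr hx, by rw [Real.sq_sqrt hx.le, hxA]⟩

theorem det_eq_ofReal_of_posSemidef_of_det_mul_self {S : Matrix n n 𝕜} (hS : S.PosSemidef) {r : ℝ}
    (hr : 0 ≤ r) (hdet : (S * S).det = ((r ^ 2 : ℝ) : 𝕜)) : S.det = (r : 𝕜) := by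
  obtain ⟨x, hx, hxS⟩ := RCLike.nonneg_iff_exists_ofReal.mp hS.det_nonneg
  rw [det_mul, ← hxS, ← sq] at hdet
  rw [← hxS]
  norm_cast at hdet ⊢
  exact (sq_eq_sq₀ hx hr).mp hdet

theorem soStar_overlap_general {ω ζ : Matrix m n 𝕜} (hω : (1 - ωᴴ * ω).PosDef)
    (hζ : (1 - ζᴴ * ζ).PosDef) :
    ∃ r s : ℝ, 0 < r ∧ 0 < s ∧
      (1 - ζᴴ * ζ).det = ((r ^ 2 : ℝ) : 𝕜) ∧
      (1 - ωᴴ * ω).det = ((s ^ 2 : ℝ) : 𝕜) ∧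
      (1 - ωᴴ * ζ).det ≠ 0 ∧
      ∀ Sζ Sω : Matrix m m 𝕜,
        Sζ.PosDef → Sζ * Sζ = 1 - ζ * ζᴴ →
        Sω.PosDef → Sω * Sω = 1 - ω * ωᴴ →
        (Sζ * (1 - ζ * ωᴴ)⁻¹ * Sω).det = ((r * s : ℝ) : 𝕜) / (1 - ωᴴ * ζ).det := by
  obtain ⟨r, hr, hdetζ⟩ := exists_pos_det_eq_sq_of_posDef hζ
  obtain ⟨s, hs, hdetω⟩ := exists_pos_det_eq_sq_of_posDef hω
  refine ⟨r, s, hr, hs, hdetζ, hdetω, det_one_sub_conjTranspose_mul_ne_zero hω hζ, ?_⟩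
  intro Sζ Sω hSζ hSζ_sq hSω hSω_sq
  have hdetSζ : Sζ.det = (r : 𝕜) :=
    det_eq_ofReal_of_posSemidef_of_det_mul_self hSζ.posSemidef hr.le
      (by rw [hSζ_sq, det_one_sub_mul_comm, hdetζ])
  have hdetSω : Sω.det = (s : 𝕜) :=
    det_eq_ofReal_of_posSemidef_of_det_mul_self hSω.posSemidef hs.le
      (by rw [hSω_sq, det_one_sub_mul_comm, hdetω])
  calc (Sζ * (1 - ζ * ωᴴ)⁻¹ * Sω).det
      = Sζ.det * (1 - ζ * ωᴴ).det⁻¹ * Sω.det := by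
        rw [det_mul, det_mul, det_nonsing_inv, Ring.inverse_eq_inv']
    _ = r * (1 - ωᴴ * ζ).det⁻¹ * s := by rw [hdetSζ, hdetSω, det_one_sub_mul_comm]
    _ = ((r * s : ℝ) : 𝕜) / (1 - ωᴴ * ζ).det := by rw [RCLike.ofReal_mul]; ring

end RCLike

/-- **Coherent state overlap formula.** For `ω, ζ ∈ Ω_N`, the determinants
`det(1 − ζ*ζ)` and `det(1 − ω*ω)` are positive reals (say `r²` and `s²` with `r, s > 0`
their positive square roots), `det(1 − ω*ζ) ≠ 0`, and for the unique positive-definite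
square roots `S_ζ = sqrt(1 − ζζ*)`, `S_ω = sqrt(1 − ωω*)` one has
`det(S_ζ (1 − ζω*)⁻¹ S_ω) = r·s / det(1 − ω*ζ)`. -/
theorem soStar_overlap (N : ℕ) (ω ζ : Matrix (Fin N) (Fin N) ℂ)
    (hω : ωᵀ = -ω) (hpdω : (1 - ωᴴ * ω).PosDef)
    (hζ : ζᵀ = -ζ) (hpdζ : (1 - ζᴴ * ζ).PosDef) :
    ∃ r s : ℝ, 0 < r ∧ 0 < s ∧
      (1 - ζᴴ * ζ).det = ((r ^ 2 : ℝ) : ℂ) ∧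
      (1 - ωᴴ * ω).det = ((s ^ 2 : ℝ) : ℂ) ∧
      (1 - ωᴴ * ζ).det ≠ 0 ∧
      ∀ Sζ Sω : Matrix (Fin N) (Fin N) ℂ,
        Sζ.PosDef → Sζ * Sζ = 1 - ζ * ζᴴ →
        Sω.PosDef → Sω * Sω = 1 - ω * ωᴴ →
        (Sζ * (1 - ζ * ωᴴ)⁻¹ * Sω).det = ((r * s : ℝ) : ℂ) / (1 - ωᴴ * ζ).det := by
  exact soStar_overlap_general hpdω hpdζ
end

section
/- Probability distribution of the total area: let ζ ∈ M_N(ℂ) be antisymmetric of rank 2 with 1 − ζ*ζ positive definite, and set x := (1/2) tr(ζ*ζ), a real number with 0 ≤ x < 1. Then det(1 − ζ*ζ) = (1 − x)², the numbers P_ζ(J) := det(1 − ζ*ζ) · x^J · (J+1) for J ∈ ℕ satisfy Σ_{J=0}^{∞} P_ζ(J) = 1, and the mean of this distribution equals the expected total area: Σ_{J=0}^{∞} J · P_ζ(J) = tr[ζ*ζ (1 − ζ*ζ)⁻¹] = 2x/(1−x). -/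
open Matrix ComplexOrder

/-!
An antisymmetric `ζ` of rank at most 2 factors as `ζ = A * S * Aᵀ` with `S` antisymmetric of size
`2 × 2`. Cyclically permuting the factors of `ζᴴ * ζ` leaves the `2 × 2` matrix
`Sᴴ * G * S * Gᵀ` with `G = Aᴴ * A`, which is a scalar `x` because `Sᴴ * G * S` is a multiple of the
transposed adjugate of `G`. Hence the square of `ζᴴ * ζ` is `x` times `ζᴴ * ζ`, so its trace, its
resolvent and the determinant of `1 - ζᴴ * ζ` are explicit in `x`. What remains is the normalisation
and the mean of a negative binomial distribution.
-/

section Congruence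

variable {K m n : Type*} [Field K] [Fintype m] [Fintype n] {r : ℕ}

theorem exists_mul_mul_eq_self_of_rank_le {M : Matrix m n K} (hM : M.rank ≤ r) :
    ∃ (A : Matrix m (Fin r) K) (L : Matrix (Fin r) m K), A * L * M = M := by
  classical
  let f := M.toLin'
  obtain ⟨e, he⟩ : ∃ e : f.range →ₗ[K] (Fin r → K), Function.Injective e :=
    finrank_le_iff_exists_linearMap.1 (by rwa [Module.finrank_fin_fun])
  obtain ⟨g, hge⟩ := e.exists_leftInverse_of_injective (LinearMap.ker_eq_bot.2 he)
  obtain ⟨q, hq⟩ := f.range.subtype.exists_leftInverse_of_injective f.range.ker_subtype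
  have hf : (f.range.subtype ∘ₗ g) ∘ₗ (e ∘ₗ q) ∘ₗ f = f := by
    refine LinearMap.ext fun v ↦ ?_
    have hqf : q (f v) = f.rangeRestrict v := LinearMap.congr_fun hq (f.rangeRestrict v)
    have hgef : g (e (f.rangeRestrict v)) = f.rangeRestrict v := LinearMap.congr_fun hge _
    simp only [LinearMap.comp_apply, hqf, hgef, Submodule.subtype_apply,
      LinearMap.codRestrict_apply]
  refine ⟨(f.range.subtype ∘ₗ g).toMatrix', (e ∘ₗ q).toMatrix', Matrix.toLin'.injective ?_⟩
  rwa [Matrix.mul_assoc, Matrix.toLin'_mul, Matrix.toLin'_mul, Matrix.toLin'_toMatrix',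
    Matrix.toLin'_toMatrix']

theorem exists_eq_mul_mul_transpose_of_transpose_eq_neg {M : Matrix n n K} (hM : Mᵀ = -M)
    (hr : M.rank ≤ r) :
    ∃ (A : Matrix n (Fin r) K) (S : Matrix (Fin r) (Fin r) K), Sᵀ = -S ∧ M = A * S * Aᵀ := by
  obtain ⟨A, L, hAL⟩ := exists_mul_mul_eq_self_of_rank_le hr
  have hLA : M * Lᵀ * Aᵀ = M := by
    simpa [hM, Matrix.mul_assoc] using congrArg Matrix.transpose hAL
  refine ⟨A, L * M * Lᵀ, by simp [hM, Matrix.mul_assoc], ?_⟩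
  calc M = A * L * (M * Lᵀ * Aᵀ) := by rw [hLA, hAL]
    _ = A * (L * M * Lᵀ) * Aᵀ := by simp only [Matrix.mul_assoc]

end Congruence

theorem conjTranspose_mul_mul_eq_smul_transpose_adjugate {R : Type*} [CommRing R]
    [IsAddTorsionFree R] [StarRing R] {S : Matrix (Fin 2) (Fin 2) R} (hS : Sᵀ = -S)
    (G : Matrix (Fin 2) (Fin 2) R) :
    Sᴴ * G * S = (star (S 0 1) * S 0 1) • (adjugate G)ᵀ := by
  have h00 : S 0 0 = 0 := self_eq_neg.1 (congrFun₂ hS 0 0)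
  have h11 : S 1 1 = 0 := self_eq_neg.1 (congrFun₂ hS 1 1)
  have h10 : S 1 0 = -S 0 1 := congrFun₂ hS 0 1
  have hH : Sᴴ = !![0, -star (S 0 1); star (S 0 1), 0] := by
    rw [eta_fin_two Sᴴ]
    simp only [conjTranspose_apply, h00, h11, h10, star_zero, star_neg]
  rw [hH, eta_fin_two S, eta_fin_two G, adjugate_fin_two_of, h00, h11, h10]
  ext i j
  fin_cases i <;> fin_cases j <;> simp [mul_comm, mul_left_comm]

section RCLike

variable {𝕜 m n : Type*} [RCLike 𝕜] [Fintype n]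

theorem pos_of_posDef_of_mul_eq_smul {A : Matrix n n 𝕜} (hA : A.PosDef)
    {B : Matrix n m 𝕜} (hB : B ≠ 0) {μ : 𝕜} (h : A * B = μ • B) : 0 < μ := by
  obtain ⟨j, hj⟩ : ∃ j, B.col j ≠ 0 := by
    contrapose! hB
    ext i j
    exact congrFun (hB j) i
  have hμ : A *ᵥ B.col j = μ • B.col j := funext fun i ↦ congrFun₂ h i j
  have hpos := hA.dotProduct_mulVec_pos hj
  rw [hμ, dotProduct_smul, smul_eq_mul] at hpos
  exact (pos_iff_pos_of_mul_pos hpos).2 (dotProduct_star_self_pos_iff.2 hj)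

theorem lt_one_of_posDef_one_sub_mul [Fintype m] [DecidableEq m] [Nonempty m] [DecidableEq n]
    {X : Matrix n m 𝕜} {Y : Matrix m n 𝕜} {x : ℝ} (hpd : (1 - X * Y).PosDef)
    (h : Y * X = (x : 𝕜) • 1) : x < 1 := by
  rcases eq_or_ne X 0 with rfl | hX
  · have hx : (x : 𝕜) = 0 := by simpa using h.symm
    exact (RCLike.ofReal_eq_zero.1 hx).trans_lt one_pos
  · have hmul : (1 - X * Y) * X = (1 - x : 𝕜) • X := by
      rw [Matrix.sub_mul, Matrix.one_mul, Matrix.mul_assoc, h, Matrix.mul_smul, Matrix.mul_one,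
        sub_smul, one_smul]
    have hpos : (0 : 𝕜) < 1 - x := pos_of_posDef_of_mul_eq_smul hpd hX hmul
    exact sub_pos.1 (by exact_mod_cast hpos)

theorem exists_conjTranspose_mul_self_eq_mul {ζ : Matrix n n 𝕜} (hζ : ζᵀ = -ζ)
    (hr : ζ.rank ≤ 2) :
    ∃ (x : ℝ) (X : Matrix n (Fin 2) 𝕜) (Y : Matrix (Fin 2) n 𝕜),
      0 ≤ x ∧ ζᴴ * ζ = X * Y ∧ Y * X = (x : 𝕜) • 1 := by
  obtain ⟨A, S, hS, rfl⟩ := exists_eq_mul_mul_transpose_of_transpose_eq_neg hζ hr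
  set G := Aᴴ * A with hG
  have hnonneg : 0 ≤ star (S 0 1) * S 0 1 * G.det :=
    mul_nonneg (star_mul_self_nonneg _) (posSemidef_conjTranspose_mul_self A).det_nonneg
  obtain ⟨x, hx0, hx⟩ := RCLike.nonneg_iff_exists_ofReal.1 hnonneg
  have hGT : Aᵀ * Aᵀᴴ = Gᵀ := by
    rw [hG, transpose_mul]
    rfl
  refine ⟨x, Aᵀᴴ, Sᴴ * G * S * Aᵀ, hx0, ?_, ?_⟩
  · simp only [hG, conjTranspose_mul, Matrix.mul_assoc]
  · calc Sᴴ * G * S * Aᵀ * Aᵀᴴ = (star (S 0 1) * S 0 1) • (adjugate G)ᵀ * Gᵀ := by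
          rw [Matrix.mul_assoc _ Aᵀ, hGT, conjTranspose_mul_mul_eq_smul_transpose_adjugate hS]
      _ = (x : 𝕜) • 1 := by
          rw [Matrix.smul_mul, ← transpose_mul, mul_adjugate, transpose_smul, transpose_one,
            smul_smul, hx]

end RCLike

section ScalarProduct

variable {R k n : Type*} [CommRing R] [Fintype k] [DecidableEq k] [Fintype n]
  {X : Matrix n k R} {Y : Matrix k n R} {c : R}

theorem mul_mul_mul_eq_smul_of_mul_eq_smul_one (h : Y * X = c • 1) :
    X * Y * (X * Y) = c • (X * Y) := by
  rw [Matrix.mul_assoc, ← Matrix.mul_assoc Y, h, Matrix.smul_mul, Matrix.one_mul, Matrix.mul_smul]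

theorem trace_mul_of_mul_eq_smul_one (h : Y * X = c • 1) :
    (X * Y).trace = Fintype.card k * c := by
  rw [trace_mul_comm, h, trace_smul, trace_one, smul_eq_mul, mul_comm]

theorem det_one_sub_mul_of_mul_eq_smul_one [DecidableEq n] (h : Y * X = c • 1) :
    (1 - X * Y).det = (1 - c) ^ Fintype.card k := by
  have hsub : (1 : Matrix k k R) - c • 1 = (1 - c) • 1 := by rw [sub_smul, one_smul]
  rw [det_one_sub_mul_comm, h, hsub, det_smul, det_one, mul_one]

end ScalarProduct

theorem mul_inv_one_sub_of_mul_self_eq_smul {K n : Type*} [Field K] [Fintype n] [DecidableEq n]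
    {P : Matrix n n K} {c : K} (hP : P * P = c • P) (hc : c ≠ 1) :
    P * (1 - P)⁻¹ = (1 - c)⁻¹ • P := by
  have hc' : 1 - c ≠ 0 := sub_ne_zero.2 hc.symm
  have hmul : P * (1 - P) = (1 - c) • P := by rw [mul_sub, mul_one, hP, sub_smul, one_smul]
  have hinv : (1 - P)⁻¹ = 1 + (1 - c)⁻¹ • P := by
    refine inv_eq_left_inv ?_
    rw [add_mul, one_mul, Matrix.smul_mul, hmul, inv_smul_smul₀ hc', sub_add_cancel]
  calc P * (1 - P)⁻¹ = (1 - c)⁻¹ • ((1 - c) • P + P * P) := by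
        rw [hinv, mul_add, mul_one, Matrix.mul_smul, smul_add, inv_smul_smul₀ hc']
    _ = (1 - c)⁻¹ • P := by rw [hP, ← add_smul, sub_add_cancel, one_smul]

section NegativeBinomial

theorem one_sub_ne_zero_of_norm_lt_one {R : Type*} [NormedRing R] [NormOneClass R] {x : R}
    (hx : ‖x‖ < 1) : 1 - x ≠ 0 :=
  sub_ne_zero.2 fun h ↦ by simp [← h] at hx

theorem hasSum_mul_choose_mul_geometric_of_norm_lt_one {𝕜 : Type*} [NormedDivisionRing 𝕜]
    (k : ℕ) {x : 𝕜} (hx : ‖x‖ < 1) :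
    HasSum (fun j : ℕ ↦ j * (j + k).choose k * x ^ j) ((k + 1) * (x / (1 - x) ^ (k + 2))) := by
  have hne := one_sub_ne_zero_of_norm_lt_one hx
  have hchoose (j : ℕ) : (j * (j + k).choose k : 𝕜) =
      (k + 1) * ((j + (k + 1)).choose (k + 1) - (j + k).choose k) := by
    have hnat : j * (j + k).choose k + (k + 1) * (j + k).choose k =
        (k + 1) * (j + (k + 1)).choose (k + 1) := by
      rw [← add_mul, ← add_assoc, Nat.add_one_mul_choose_eq, mul_comm]
    rw [mul_sub, eq_sub_iff_add_eq]
    exact mod_cast congrArg (Nat.cast : ℕ → 𝕜) hnat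
  have hvalue : x / (1 - x) ^ (k + 2) = 1 / (1 - x) ^ (k + 2) - 1 / (1 - x) ^ (k + 1) := by
    have hcancel : (1 - x) / (1 - x) ^ (k + 2) = 1 / (1 - x) ^ (k + 1) := by
      rw [pow_succ, div_mul_cancel_right₀ hne, one_div]
    rw [← hcancel, ← sub_div, sub_sub_cancel]
  simp only [hchoose, hvalue, mul_assoc, sub_mul]
  exact ((hasSum_choose_mul_geometric_of_norm_lt_one (k + 1) hx).sub
    (hasSum_choose_mul_geometric_of_norm_lt_one k hx)).mul_left _

variable {𝕜 : Type*} [NormedField 𝕜] {x : 𝕜}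

theorem hasSum_one_sub_sq_mul_pow_mul_add_one (hx : ‖x‖ < 1) :
    HasSum (fun j : ℕ ↦ (1 - x) ^ 2 * x ^ j * (j + 1)) 1 := by
  have hne := one_sub_ne_zero_of_norm_lt_one hx
  convert! (hasSum_choose_mul_geometric_of_norm_lt_one 1 hx).mul_left ((1 - x) ^ 2) using 1
  · ext j
    simp only [Nat.choose_one_right, Nat.cast_add, Nat.cast_one]
    ring
  · field_simp

theorem hasSum_mul_one_sub_sq_mul_pow_mul_add_one (hx : ‖x‖ < 1) :
    HasSum (fun j : ℕ ↦ j * ((1 - x) ^ 2 * x ^ j * (j + 1))) (2 * x / (1 - x)) := by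
  have hne := one_sub_ne_zero_of_norm_lt_one hx
  convert! (hasSum_mul_choose_mul_geometric_of_norm_lt_one 1 hx).mul_left ((1 - x) ^ 2) using 1
  · ext j
    simp only [Nat.choose_one_right, Nat.cast_add, Nat.cast_one]
    ring
  · push_cast
    field_simp
    ring

end NegativeBinomial

theorem total_area_distribution_general {𝕜 n : Type*} [RCLike 𝕜] [Fintype n] [DecidableEq n]
    {ζ : Matrix n n 𝕜} (hζ : ζᵀ = -ζ) (hrank : ζ.rank ≤ 2) (hpd : (1 - ζᴴ * ζ).PosDef) :
    ∃ x : ℝ, 0 ≤ x ∧ x < 1 ∧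
      (1 / 2 : 𝕜) * (ζᴴ * ζ).trace = (x : 𝕜) ∧
      (1 - ζᴴ * ζ).det = (((1 - x) ^ 2 : ℝ) : 𝕜) ∧
      HasSum (fun J : ℕ ↦ (1 - x) ^ 2 * x ^ J * (J + 1)) 1 ∧
      HasSum (fun J : ℕ ↦ J * ((1 - x) ^ 2 * x ^ J * (J + 1))) (2 * x / (1 - x)) ∧
      (ζᴴ * ζ * (1 - ζᴴ * ζ)⁻¹).trace = ((2 * x / (1 - x) : ℝ) : 𝕜) := by
  obtain ⟨x, X, Y, hx0, hXY, hYX⟩ := exists_conjTranspose_mul_self_eq_mul hζ hrank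
  have hx1 : x < 1 := lt_one_of_posDef_one_sub_mul (hXY ▸ hpd) hYX
  have hnorm : ‖x‖ < 1 := by rwa [Real.norm_of_nonneg hx0]
  have htrace : (X * Y).trace = 2 * (x : 𝕜) := by
    simpa using trace_mul_of_mul_eq_smul_one hYX
  have hdet : (1 - X * Y).det = (1 - x : 𝕜) ^ 2 := det_one_sub_mul_of_mul_eq_smul_one hYX
  have hresolvent : X * Y * (1 - X * Y)⁻¹ = (1 - x : 𝕜)⁻¹ • (X * Y) :=
    mul_inv_one_sub_of_mul_self_eq_smul (mul_mul_mul_eq_smul_of_mul_eq_smul_one hYX)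
      (by exact_mod_cast hx1.ne)
  rw [hXY, hresolvent, trace_smul, htrace, hdet]
  refine ⟨x, hx0, hx1, ?_, ?_, hasSum_one_sub_sq_mul_pow_mul_add_one hnorm,
    hasSum_mul_one_sub_sq_mul_pow_mul_add_one hnorm, ?_⟩
  · ring
  · push_cast
    rfl
  · push_cast
    rw [smul_eq_mul, inv_mul_eq_div]

/-- **Probability distribution of the total area.** Let `ζ ∈ M_N(ℂ)` be antisymmetric of
rank 2 with `1 − ζ*ζ` positive definite, and let `x = (1/2) tr(ζ*ζ)`; then `x` is a real
number with `0 ≤ x < 1`, `det(1 − ζ*ζ) = (1 − x)²`, the numbers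
`P_ζ(J) = det(1 − ζ*ζ)·x^J·(J+1)` sum to 1 over `J ∈ ℕ`, and the mean
`Σ_J J·P_ζ(J)` equals the expected total area `tr[ζ*ζ(1 − ζ*ζ)⁻¹] = 2x/(1−x)`. -/
theorem total_area_distribution (N : ℕ) (ζ : Matrix (Fin N) (Fin N) ℂ)
    (hζ : ζᵀ = -ζ) (hrank : ζ.rank = 2) (hpd : (1 - ζᴴ * ζ).PosDef) :
    ∃ x : ℝ, 0 ≤ x ∧ x < 1 ∧
      (1 / 2 : ℂ) * (ζᴴ * ζ).trace = (x : ℂ) ∧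
      (1 - ζᴴ * ζ).det = (((1 - x) ^ 2 : ℝ) : ℂ) ∧
      (∑' J : ℕ, (1 - x) ^ 2 * x ^ J * (J + 1)) = 1 ∧
      (∑' J : ℕ, (J : ℝ) * ((1 - x) ^ 2 * x ^ J * (J + 1))) = 2 * x / (1 - x) ∧
      (ζᴴ * ζ * (1 - ζᴴ * ζ)⁻¹).trace = ((2 * x / (1 - x) : ℝ) : ℂ) :=
  let ⟨x, hx0, hx1, htrace, hdet, hsum, hmean, harea⟩ :=
    total_area_distribution_general hζ hrank.le hpd
  ⟨x, hx0, hx1, htrace, hdet, hsum.tsum_eq, hmean.tsum_eq, harea⟩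
end

section
/- Symmetries of the decomposition: let M = ⊕_{i=1}^{ℓ} Λ_i Ω_{μ_i} ⊕ 0_{N−2k} ∈ M_N(ℂ), where Λ_1 > Λ_2 > … > Λ_ℓ > 0 are distinct positive reals, μ_1, …, μ_ℓ are positive integers with Σ_i μ_i = k, Ω_μ := ⊕_{j=1}^{μ} σ with σ = [[0,−1],[1,0]], and 2k ≤ N. Then a unitary matrix W ∈ U(N) satisfies W M Wᵀ = M if and only if W is block diagonal, W = diag(W_1, …, W_ℓ, D), where each W_i is a 2μ_i × 2μ_i unitary matrix satisfying W_i Ω_{μ_i} W_iᵀ = Ω_{μ_i} (i.e., W_i lies in the compact symplectic group Sp(2μ_i) = Sp(2μ_i,ℂ) ∩ U(2μ_i)) and D ∈ U(N−2k) is unitary. -/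
open Matrix

/-- `Ω_μ = ⊕_{j=1}^{μ} σ` with `σ = [[0, −1], [1, 0]]`, as a `2μ × 2μ` matrix:
entry `(2j+1, 2j) = 1`, entry `(2j, 2j+1) = −1`, all others `0`. -/
noncomputable def OmegaMat (μ : ℕ) : Matrix (Fin (2 * μ)) (Fin (2 * μ)) ℂ :=
  fun x y =>
    if (x : ℕ) = (y : ℕ) + 1 ∧ (y : ℕ) % 2 = 0 then 1
    else if (y : ℕ) = (x : ℕ) + 1 ∧ (x : ℕ) % 2 = 0 then -1 else 0

/-- `M = ⊕_{i=1}^{ℓ} Λ_i Ω_{μ_i} ⊕ 0_{N−2k}`, realized over the index type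
`(Σ i : Fin ℓ, Fin (2μ_i)) ⊕ Fin m` (so `N = 2k + m` with `k = Σ μ_i`). -/
noncomputable def bigM (ℓ m : ℕ) (μ : Fin ℓ → ℕ) (Λ : Fin ℓ → ℝ) :
    Matrix ((Σ i : Fin ℓ, Fin (2 * μ i)) ⊕ Fin m)
      ((Σ i : Fin ℓ, Fin (2 * μ i)) ⊕ Fin m) ℂ :=
  Matrix.fromBlocks
    (Matrix.blockDiagonal' fun i => (Λ i : ℂ) • OmegaMat (μ i)) 0 0 0

/-!
If `W` and `Wᵀ` are unitary, then `W M Wᵀ = M` makes `W` commute with `M Mᴴ`. Because the blocks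
of `M` are scalar multiples of unitary matrices, `M Mᴴ` is diagonal, equal to the scalar `|Λ_i|²`
on the `i`-th block and to `0` on the last one. These scalars are pairwise distinct, so `W` is
block diagonal, and the congruence can then be read off block by block.
-/

open scoped Kronecker

theorem commute_mul_star_self_of_mul_mul_eq {S : Type*} [Monoid S] [StarMul S] {u v a : S}
    (hu : u ∈ unitary S) (hv : v ∈ unitary S) (h : u * a * v = a) : Commute u (a * star a) := by
  have conj_eq : a * star a = u * (a * star a) * star u :=
    calc a * star a = u * a * v * star (u * a * v) := by rw [h]
      _ = u * a * (v * star v) * (star a * star u) := by simp only [star_mul, mul_assoc]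
      _ = u * (a * star a) * star u := by
        rw [Unitary.mul_star_self_of_mem hv, mul_one]; simp only [mul_assoc]
  calc u * (a * star a) = u * (a * star a) * (star u * u) := by
        rw [Unitary.star_mul_self_of_mem hu, mul_one]
    _ = a * star a * u := by rw [← mul_assoc, ← conj_eq]

theorem apply_eq_zero_of_commute_diagonal {n R : Type*} [Fintype n] [DecidableEq n]
    [CommSemiring R] [IsCancelMulZero R] {W : Matrix n n R} {d : n → R}
    (h : Commute W (diagonal d)) {x y : n} (hxy : d x ≠ d y) : W x y = 0 := by
  have entry_eq : W x y * d y = W x y * d x := by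
    simpa only [mul_diagonal, diagonal_mul, mul_comm (d x)] using congrFun₂ h.eq x y
  exact (mul_eq_mul_left_iff.mp entry_eq).resolve_left hxy.symm

theorem blockDiagonal'_blockDiag' {ι R : Type*} {n : ι → Type*} [DecidableEq ι] [Zero R]
    {A : Matrix (Σ i, n i) (Σ i, n i) R} (hA : ∀ x y, x.1 ≠ y.1 → A x y = 0) :
    blockDiagonal' (blockDiag' A) = A := by
  ext ⟨i, a⟩ ⟨j, b⟩
  obtain rfl | hij := eq_or_ne i j
  · rw [blockDiagonal'_apply_eq, blockDiag'_apply]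
  · rw [blockDiagonal'_apply_ne _ _ _ hij, hA _ _ hij]

/-- The block-diagonal matrix `diag(A_1, …, A_ℓ, D)`, with the last block kept apart from the
indexed family so that the kernel of `M` can be treated separately. -/
def blockSum {ι m R : Type*} {n : ι → Type*} [DecidableEq ι] [Zero R]
    (A : ∀ i, Matrix (n i) (n i) R) (D : Matrix m m R) :
    Matrix ((Σ i, n i) ⊕ m) ((Σ i, n i) ⊕ m) R :=
  fromBlocks (blockDiagonal' A) 0 0 D

section blockSum

variable {ι m R : Type*} {n : ι → Type*} [DecidableEq ι]

theorem blockSum_inj [Zero R] {A B : ∀ i, Matrix (n i) (n i) R} {D E : Matrix m m R} :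
    blockSum A D = blockSum B E ↔ A = B ∧ D = E := by
  simp [blockSum, fromBlocks_inj, blockDiagonal'_inj]

theorem blockSum_transpose [Zero R] (A : ∀ i, Matrix (n i) (n i) R) (D : Matrix m m R) :
    (blockSum A D)ᵀ = blockSum (fun i => (A i)ᵀ) Dᵀ := by
  simp [blockSum, fromBlocks_transpose, blockDiagonal'_transpose]

theorem star_blockSum [AddMonoid R] [StarAddMonoid R] (A : ∀ i, Matrix (n i) (n i) R)
    (D : Matrix m m R) : star (blockSum A D) = blockSum (fun i => star (A i)) (star D) := by
  simp [blockSum, star_eq_conjTranspose, fromBlocks_conjTranspose, blockDiagonal'_conjTranspose]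

theorem blockSum_diagonal [Zero R] [∀ i, DecidableEq (n i)] [DecidableEq m]
    (d : ∀ i, n i → R) (e : m → R) :
    blockSum (fun i => diagonal (d i)) (diagonal e) =
      diagonal (Sum.elim (fun x => d x.1 x.2) e) := by
  rw [blockSum, blockDiagonal'_diagonal, fromBlocks_diagonal]

variable [Fintype ι] [∀ i, Fintype (n i)] [Fintype m]

theorem blockSum_mul [NonUnitalNonAssocSemiring R] (A B : ∀ i, Matrix (n i) (n i) R)
    (D E : Matrix m m R) :
    blockSum A D * blockSum B E = blockSum (fun i => A i * B i) (D * E) := by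
  simp [blockSum, fromBlocks_multiply, blockDiagonal'_mul]

theorem blockSum_mul_mul_transpose_eq_iff [CommSemiring R] [IsCancelMulZero R]
    {A J : ∀ i, Matrix (n i) (n i) R} {D : Matrix m m R} {c : ι → R} (hc : ∀ i, c i ≠ 0) :
    blockSum A D * blockSum (fun i => c i • J i) 0 * (blockSum A D)ᵀ =
        blockSum (fun i => c i • J i) 0 ↔
      ∀ i, A i * J i * (A i)ᵀ = J i := by
  simp [blockSum_transpose, blockSum_mul, blockSum_inj, funext_iff, smul_right_inj, hc]

variable [∀ i, DecidableEq (n i)] [DecidableEq m]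

theorem blockSum_mem_unitaryGroup_iff [CommRing R] [StarRing R]
    {A : ∀ i, Matrix (n i) (n i) R} {D : Matrix m m R} :
    blockSum A D ∈ unitaryGroup ((Σ i, n i) ⊕ m) R ↔
      (∀ i, A i ∈ unitaryGroup (n i) R) ∧ D ∈ unitaryGroup m R := by
  have one_eq : (1 : Matrix ((Σ i, n i) ⊕ m) ((Σ i, n i) ⊕ m) R) = blockSum (fun _ => 1) 1 := by
    rw [blockSum, ← Pi.one_def, blockDiagonal'_one, fromBlocks_one]
  simp only [mem_unitaryGroup_iff, star_blockSum, blockSum_mul, one_eq, blockSum_inj, funext_iff]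

theorem blockSum_smul_mul_star [CommRing R] [StarRing R] {J : ∀ i, Matrix (n i) (n i) R}
    (hJ : ∀ i, J i ∈ unitaryGroup (n i) R) (c : ι → R) :
    blockSum (fun i => c i • J i) (0 : Matrix m m R) * star (blockSum (fun i => c i • J i) 0) =
      diagonal (Sum.elim (fun x => c x.1 * star (c x.1)) 0) := by
  have block_mul_star (i : ι) :
      c i • J i * star (c i • J i) = diagonal fun _ => c i * star (c i) := by
    rw [star_smul, smul_mul_smul_comm, mem_unitaryGroup_iff.mp (hJ i), smul_one_eq_diagonal]
  have zero_mul_star : (0 : Matrix m m R) * star 0 = diagonal 0 := by simp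
  rw [star_blockSum, blockSum_mul, zero_mul_star]
  simp only [block_mul_star, blockSum_diagonal]

theorem exists_eq_blockSum_of_commute_diagonal [CommSemiring R] [IsCancelMulZero R]
    {W : Matrix ((Σ i, n i) ⊕ m) ((Σ i, n i) ⊕ m) R} {d : ι → R} {e : R}
    (hd : Function.Injective d) (he : ∀ i, d i ≠ e)
    (hW : Commute W (diagonal (Sum.elim (fun x => d x.1) fun _ => e))) :
    ∃ A D, W = blockSum A D := by
  refine ⟨blockDiag' W.toBlocks₁₁, W.toBlocks₂₂, ?_⟩
  have diag_block : blockDiagonal' (blockDiag' W.toBlocks₁₁) = W.toBlocks₁₁ :=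
    blockDiagonal'_blockDiag' fun _ _ hxy => apply_eq_zero_of_commute_diagonal hW (hd.ne hxy)
  have upper_right : W.toBlocks₁₂ = 0 := by
    ext x y; exact apply_eq_zero_of_commute_diagonal hW (he x.1)
  have lower_left : W.toBlocks₂₁ = 0 := by
    ext x y; exact apply_eq_zero_of_commute_diagonal hW (he y.1).symm
  rw [blockSum, diag_block, ← upper_right, ← lower_left, fromBlocks_toBlocks]

theorem symmetries_of_decomposition_general [CommRing R] [IsDomain R] [StarRing R]
    {J : ∀ i, Matrix (n i) (n i) R} (hJ : ∀ i, J i ∈ unitaryGroup (n i) R)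
    {c : ι → R} (hc : ∀ i, c i ≠ 0) (hc_inj : Function.Injective fun i => c i * star (c i))
    {W : Matrix ((Σ i, n i) ⊕ m) ((Σ i, n i) ⊕ m) R}
    (hW : W ∈ unitaryGroup ((Σ i, n i) ⊕ m) R) :
    W * blockSum (fun i => c i • J i) 0 * Wᵀ = blockSum (fun i => c i • J i) 0 ↔
      ∃ (A : ∀ i, Matrix (n i) (n i) R) (D : Matrix m m R),
        (∀ i, A i ∈ unitaryGroup (n i) R ∧ A i * J i * (A i)ᵀ = J i) ∧
        D ∈ unitaryGroup m R ∧ W = blockSum A D := by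
  constructor
  · intro h
    have commute_diagonal :=
      commute_mul_star_self_of_mul_mul_eq hW (transpose_mem_unitaryGroup_iff.mpr hW) h
    rw [blockSum_smul_mul_star hJ] at commute_diagonal
    have hc_norm (i : ι) : c i * star (c i) ≠ 0 := mul_ne_zero (hc i) (star_ne_zero.mpr (hc i))
    obtain ⟨A, D, rfl⟩ := exists_eq_blockSum_of_commute_diagonal hc_inj hc_norm commute_diagonal
    obtain ⟨hA, hD⟩ := blockSum_mem_unitaryGroup_iff.mp hW
    exact ⟨A, D, fun i => ⟨hA i, (blockSum_mul_mul_transpose_eq_iff hc).mp h i⟩, hD, rfl⟩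
  · rintro ⟨A, D, hA, -, rfl⟩
    exact (blockSum_mul_mul_transpose_eq_iff hc).mpr fun i => (hA i).2

end blockSum

theorem OmegaMat_eq_reindex_one_kronecker (μ : ℕ) :
    OmegaMat μ =
      reindex (finProdFinEquiv.trans (finCongr (mul_comm μ 2)))
        (finProdFinEquiv.trans (finCongr (mul_comm μ 2)))
        ((1 : Matrix (Fin μ) (Fin μ) ℂ) ⊗ₖ !![0, -1; 1, 0]) := by
  rw [← Equiv.symm_apply_eq, reindex_symm]
  ext ⟨i, a⟩ ⟨j, b⟩
  simp only [reindex_apply, submatrix_apply, Equiv.symm_symm, Equiv.trans_apply, OmegaMat,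
    finCongr_apply, Fin.val_cast, finProdFinEquiv_apply_val, kroneckerMap_apply, one_apply]
  obtain rfl | hij := eq_or_ne i j
  · fin_cases a <;> fin_cases b <;> simp [Nat.add_comm 1]
  · grind

theorem OmegaMat_mem_unitaryGroup (μ : ℕ) : OmegaMat μ ∈ unitaryGroup (Fin (2 * μ)) ℂ := by
  have rotation_mem : !![0, -1; 1, 0] ∈ unitaryGroup (Fin 2) ℂ := by
    rw [mem_unitaryGroup_iff]
    ext i j
    fin_cases i <;> fin_cases j <;> simp [star_eq_conjTranspose, mul_apply]
  have kronecker_mem := mem_unitaryGroup_iff.mp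
    (kronecker_mem_unitary (one_mem (unitaryGroup (Fin μ) ℂ)) rotation_mem)
  rw [mem_unitaryGroup_iff, OmegaMat_eq_reindex_one_kronecker, star_eq_conjTranspose,
    conjTranspose_reindex, reindex_apply, reindex_apply, submatrix_mul_equiv,
    ← star_eq_conjTranspose, kronecker_mem, submatrix_one_equiv]

theorem injective_ofReal_mul_star {ι : Type*} {Λ : ι → ℝ} (hΛ_nonneg : ∀ i, 0 ≤ Λ i)
    (hΛ : Function.Injective Λ) :
    Function.Injective fun i => (Λ i : ℂ) * star (Λ i : ℂ) := by
  intro i j hij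
  have mul_self_eq : Λ i * Λ i = Λ j * Λ j := by
    simpa [← Complex.ofReal_mul] using hij
  exact hΛ ((mul_self_inj (hΛ_nonneg i) (hΛ_nonneg j)).mp mul_self_eq)

/-- **Symmetries of the decomposition `ζ = U M Uᵀ`.** Let
`M = ⊕_i Λ_i Ω_{μ_i} ⊕ 0` with `Λ_1 > … > Λ_ℓ > 0` distinct and `μ_i ≥ 1`. A unitary
`W` satisfies `W M Wᵀ = M` iff `W = diag(W_1, …, W_ℓ, D)` with each `W_i` unitary
satisfying `W_i Ω_{μ_i} W_iᵀ = Ω_{μ_i}` (i.e. `W_i ∈ Sp(2μ_i) = Sp(2μ_i,ℂ) ∩ U(2μ_i)`)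
and `D ∈ U(N − 2k)`. -/
theorem symmetries_of_decomposition (ℓ m : ℕ) (μ : Fin ℓ → ℕ) (hμ : ∀ i, 0 < μ i)
    (Λ : Fin ℓ → ℝ) (hΛpos : ∀ i, 0 < Λ i) (hΛanti : StrictAnti Λ)
    (W : Matrix ((Σ i : Fin ℓ, Fin (2 * μ i)) ⊕ Fin m)
      ((Σ i : Fin ℓ, Fin (2 * μ i)) ⊕ Fin m) ℂ)
    (hW : W ∈ Matrix.unitaryGroup ((Σ i : Fin ℓ, Fin (2 * μ i)) ⊕ Fin m) ℂ) :
    W * bigM ℓ m μ Λ * Wᵀ = bigM ℓ m μ Λ ↔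
      ∃ (Wb : ∀ i : Fin ℓ, Matrix (Fin (2 * μ i)) (Fin (2 * μ i)) ℂ)
        (D : Matrix (Fin m) (Fin m) ℂ),
        (∀ i, Wb i ∈ Matrix.unitaryGroup (Fin (2 * μ i)) ℂ ∧
          Wb i * OmegaMat (μ i) * (Wb i)ᵀ = OmegaMat (μ i)) ∧
        D ∈ Matrix.unitaryGroup (Fin m) ℂ ∧
        W = Matrix.fromBlocks (Matrix.blockDiagonal' Wb) 0 0 D :=
  symmetries_of_decomposition_general (fun i => OmegaMat_mem_unitaryGroup (μ i))
    (fun i => Complex.ofReal_ne_zero.mpr (hΛpos i).ne')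
    (injective_ofReal_mul_star (fun i => (hΛpos i).le) hΛanti.injective) hW
end

section
/- No-go for coarse-graining: let k ≥ 2 and for α = 1, …, k and a = 1, …, N let |z^α_a⟩ ∈ ℂ² be spinors satisfying the closure constraints Σ_{a=1}^{N} |z^α_a⟩⟨z^β_a| = δ_{αβ} Λ_α 1₂ with Λ_α > 0 (so that Σ_{a=1}^{N} ⟨z^α_a|z^α_a⟩ = 2Λ_α). Define e_{ab} := Σ_{α=1}^{k} ⟨z^α_a|z^α_b⟩. Then Σ_{a,b=1}^{N} ( (1/2) e_{ab} e_{ba} − (1/4) e_{aa} e_{bb} ) = − Σ_{α ≠ β} Λ_α Λ_β < 0; consequently the coarse-grained normal vectors (whose pairwise scalar products are V_a·V_b = (1/2)e_{ab}e_{ba} − (1/4)e_{aa}e_{bb}) do not satisfy the closure condition Σ_a V_a = 0, i.e., the diagonal so*(2N) observables are not the observables of a single closed polyhedron. -/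
open Matrix

/-!
Stack the vectors into one matrix `Z` with rows indexed by `(α, i)` and columns by `a`. The
observables are `e = Zᴴ Z`, whereas the closure constraints compute the product in the other order,
`Z Zᴴ = diag(Λ) ⊗ 1`. Cyclicity of the trace transfers both `tr e` and `tr e²` to `Z Zᴴ`, so that
for vectors with `d` components `d⁻¹ tr e² - d⁻² (tr e)² = ∑ Λ_α² - (∑ Λ_α)²`, which is minus the
sum of the off-diagonal products `Λ_α Λ_β`.
-/

section FiniteSums

variable {κ R : Type*} [Fintype κ]

theorem sum_sum_ite_ne_mul [DecidableEq κ] [Ring R] (f : κ → R) :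
    ∑ α, ∑ β, (if α ≠ β then f α * f β else 0) = (∑ α, f α) ^ 2 - ∑ α, f α ^ 2 := by
  have ite_ne_eq_sub (α β : κ) : (if α ≠ β then f α * f β else 0) =
      f α * f β - if α = β then f α * f β else 0 := by
    by_cases h : α = β <;> simp [h]
  simp only [ite_ne_eq_sub, Finset.sum_sub_distrib, Finset.sum_ite_eq, Finset.mem_univ, if_true,
    sq, Finset.sum_mul_sum]

theorem sum_sum_ite_ne_pos [DecidableEq κ] [Nontrivial κ] [AddCommMonoid R]
    [PartialOrder R] [IsOrderedCancelAddMonoid R] {g : κ → κ → R} (hg : ∀ α β, α ≠ β → 0 < g α β) :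
    0 < ∑ α, ∑ β, if α ≠ β then g α β else 0 := by
  have ite_nonneg (α β : κ) : 0 ≤ if α ≠ β then g α β else 0 := by
    split_ifs with h
    exacts [(hg α β h).le, le_rfl]
  refine Finset.sum_pos (fun α _ => ?_) Finset.univ_nonempty
  obtain ⟨β, hβα⟩ := exists_ne α
  refine Finset.sum_pos' (fun β _ => ite_nonneg α β) ⟨β, Finset.mem_univ β, ?_⟩
  simpa only [if_pos hβα.symm] using hg α β hβα.symm

theorem sum_sum_mul_swap_sub_mul_diag [Ring R] (c c' : R) (e : Matrix κ κ R) :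
    ∑ a, ∑ b, (c * (e a b * e b a) - c' * (e a a * e b b)) =
      c * (e * e).trace - c' * e.trace ^ 2 := by
  simp only [Finset.sum_sub_distrib, ← Finset.mul_sum, ← Finset.sum_mul, trace, diag_apply,
    mul_apply, sq]

end FiniteSums

section Observables

variable {κ ν ι R : Type*}

/-- The closure constraints `∑ a, |z^α_a⟩⟨z^β_a| = δ_{αβ} Λ_α 1` on a family of vectors `z α a`,
where `α` labels the polyhedra and `a` their faces; spinors are the case `ι = Fin 2`. -/
def ClosureConstraints [Fintype ν] [DecidableEq κ] [DecidableEq ι] [CommSemiring R] [StarRing R]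
    (z : κ → ν → ι → R) (Λ : κ → R) : Prop :=
  ∀ α β, ∑ a, vecMulVec (z α a) (star (z β a)) =
    (if α = β then Λ α else 0) • (1 : Matrix ι ι R)

/-- The matrix of coarse-grained observables `e_{ab} = ∑ α, ⟨z^α_a|z^α_b⟩`, conjugate-linear in
the first argument. -/
def observableMatrix [Fintype κ] [Fintype ι] [CommSemiring R] [StarRing R]
    (z : κ → ν → ι → R) : Matrix ν ν R :=
  of fun a b => ∑ α, star (z α a) ⬝ᵥ z α b

/-- The matrix `Z` whose column `a` is the concatenation over `α` of the vectors `z α a`. -/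
def stackedMatrix (z : κ → ν → ι → R) : Matrix (κ × ι) ν R :=
  of fun p a => z p.1 a p.2

section CommSemiring

variable [CommSemiring R] [StarRing R] {z : κ → ν → ι → R} {Λ : κ → R}

theorem conjTranspose_stackedMatrix_mul_self [Fintype κ] [Fintype ι] (z : κ → ν → ι → R) :
    (stackedMatrix z)ᴴ * stackedMatrix z = observableMatrix z := by
  ext a b
  simp [stackedMatrix, observableMatrix, mul_apply, dotProduct, Fintype.sum_prod_type]

open scoped Kronecker

variable [Fintype ν] [DecidableEq κ] [DecidableEq ι]

theorem ClosureConstraints.stackedMatrix_mul_conjTranspose (h : ClosureConstraints z Λ) :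
    stackedMatrix z * (stackedMatrix z)ᴴ = diagonal Λ ⊗ₖ (1 : Matrix ι ι R) := by
  ext ⟨α, i⟩ ⟨β, j⟩
  simpa [stackedMatrix, mul_apply, Matrix.sum_apply, vecMulVec_apply, diagonal_apply]
    using congrFun₂ (h α β) i j

variable [Fintype κ] [Fintype ι]

theorem ClosureConstraints.trace_observableMatrix (h : ClosureConstraints z Λ) :
    (observableMatrix z).trace = Fintype.card ι * ∑ α, Λ α := by
  rw [← conjTranspose_stackedMatrix_mul_self, trace_mul_comm, h.stackedMatrix_mul_conjTranspose,
    trace_kronecker, trace_diagonal, trace_one, mul_comm]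

theorem ClosureConstraints.trace_observableMatrix_mul_self (h : ClosureConstraints z Λ) :
    (observableMatrix z * observableMatrix z).trace = Fintype.card ι * ∑ α, Λ α ^ 2 := by
  set Z := stackedMatrix z with hZ
  calc (observableMatrix z * observableMatrix z).trace
      = ((Zᴴ * Z) * (Zᴴ * Z)).trace := by rw [hZ, conjTranspose_stackedMatrix_mul_self]
    _ = ((Z * Zᴴ) * (Z * Zᴴ)).trace := by
        rw [Matrix.mul_assoc, trace_mul_comm]
        simp only [Matrix.mul_assoc]
    _ = ((diagonal fun α => Λ α * Λ α) ⊗ₖ (1 : Matrix ι ι R)).trace := by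
        rw [hZ, h.stackedMatrix_mul_conjTranspose, ← mul_kronecker_mul, diagonal_mul_diagonal,
          Matrix.mul_one]
    _ = Fintype.card ι * ∑ α, Λ α ^ 2 := by
        simp only [trace_kronecker, trace_diagonal, trace_one, mul_comm, sq]

end CommSemiring

/-- The scalar products `V_a · V_b` of the coarse-grained normals, expressed through the observables
`e`. For vectors with `d` components, the weights `1 / 2` and `1 / 4` of the spinor case `d = 2`
become `1 / d` and `1 / d ^ 2`. -/
def normalDot [Fintype κ] [Fintype ι] [Field R] [StarRing R] (z : κ → ν → ι → R) (a b : ν) : R :=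
  (1 / Fintype.card ι) * (observableMatrix z a b * observableMatrix z b a) -
    (1 / Fintype.card ι ^ 2) * (observableMatrix z a a * observableMatrix z b b)

theorem normalDot_fin_two [Fintype κ] [Field R] [StarRing R] (z : κ → ν → Fin 2 → R) (a b : ν) :
    normalDot z a b =
      (1 / 2) * ((∑ α, star (z α a) ⬝ᵥ z α b) * ∑ α, star (z α b) ⬝ᵥ z α a) -
        (1 / 4) * ((∑ α, star (z α a) ⬝ᵥ z α a) * ∑ α, star (z α b) ⬝ᵥ z α b) := by
  have two_sq : (2 : R) ^ 2 = 4 := by norm_num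
  simp only [normalDot, observableMatrix, of_apply, Fintype.card_fin, Nat.cast_ofNat, two_sq]

variable [Fintype κ] [Fintype ν] [Fintype ι] [DecidableEq κ] [DecidableEq ι]

theorem ClosureConstraints.sum_normalDot [Nonempty ι] [Field R] [CharZero R] [StarRing R]
    {z : κ → ν → ι → R} {Λ : κ → R} (h : ClosureConstraints z Λ) :
    ∑ a, ∑ b, normalDot z a b = -∑ α, ∑ β, if α ≠ β then Λ α * Λ β else 0 := by
  have card_ne_zero : (Fintype.card ι : R) ≠ 0 := Nat.cast_ne_zero.mpr Fintype.card_ne_zero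
  simp only [normalDot]
  rw [sum_sum_mul_swap_sub_mul_diag, h.trace_observableMatrix_mul_self, h.trace_observableMatrix,
    sum_sum_ite_ne_mul]
  field_simp
  ring

theorem no_go_coarse_graining_general {𝕜 : Type*} [RCLike 𝕜] [Nontrivial κ] [Nonempty ι]
    {z : κ → ν → ι → 𝕜} {Λ : κ → ℝ} (hΛ : ∀ α, 0 < Λ α)
    (hclosure : ClosureConstraints z fun α => (Λ α : 𝕜)) :
    ∑ a, ∑ b, normalDot z a b =
        -((∑ α, ∑ β, if α ≠ β then Λ α * Λ β else 0 : ℝ) : 𝕜) ∧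
      0 < ∑ α, ∑ β, (if α ≠ β then Λ α * Λ β else 0) ∧
      ∑ a, ∑ b, normalDot z a b ≠ 0 := by
  have sum_pos : 0 < ∑ α, ∑ β, (if α ≠ β then Λ α * Λ β else 0) :=
    sum_sum_ite_ne_pos fun α β _ => mul_pos (hΛ α) (hΛ β)
  have sum_eq : ∑ a, ∑ b, normalDot z a b =
      -((∑ α, ∑ β, if α ≠ β then Λ α * Λ β else 0 : ℝ) : 𝕜) := by
    rw [hclosure.sum_normalDot, sum_sum_ite_ne_mul, sum_sum_ite_ne_mul]
    push_cast
    rfl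
  refine ⟨sum_eq, sum_pos, ?_⟩
  rw [sum_eq, neg_ne_zero]
  exact RCLike.ofReal_ne_zero.mpr sum_pos.ne'

end Observables

/-- **No-go for coarse-graining.** Let `k ≥ 2` and let spinors `|z^α_a⟩ ∈ ℂ²`
(`α = 1,…,k`, `a = 1,…,N`) satisfy the closure constraints
`Σ_a |z^α_a⟩⟨z^β_a| = δ_{αβ} Λ_α 1₂` with `Λ_α > 0`. With
`e_{ab} = Σ_α ⟨z^α_a|z^α_b⟩`, one has
`Σ_{a,b} (½ e_{ab} e_{ba} − ¼ e_{aa} e_{bb}) = −Σ_{α≠β} Λ_α Λ_β < 0`; in particular it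
is nonzero, so the coarse-grained normals do not satisfy the closure condition of a
single closed polyhedron. -/
theorem no_go_coarse_graining (N k : ℕ) (hk : 2 ≤ k)
    (z : Fin k → Fin N → Fin 2 → ℂ) (Λ : Fin k → ℝ) (hΛ : ∀ α, 0 < Λ α)
    (hclosure : ∀ α β : Fin k,
      (∑ a : Fin N, Matrix.vecMulVec (z α a) (star (z β a))) =
        (if α = β then ((Λ α : ℝ) : ℂ) else 0) • (1 : Matrix (Fin 2) (Fin 2) ℂ)) :
    (∑ a : Fin N, ∑ b : Fin N,
        ((1 / 2 : ℂ) * ((∑ α : Fin k, star (z α a) ⬝ᵥ z α b) *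
            (∑ α : Fin k, star (z α b) ⬝ᵥ z α a)) -
          (1 / 4 : ℂ) * ((∑ α : Fin k, star (z α a) ⬝ᵥ z α a) *
            (∑ α : Fin k, star (z α b) ⬝ᵥ z α b)))) =
      -(((∑ α : Fin k, ∑ β : Fin k, if α ≠ β then Λ α * Λ β else 0 : ℝ)) : ℂ) ∧
    (0 : ℝ) < ∑ α : Fin k, ∑ β : Fin k, (if α ≠ β then Λ α * Λ β else 0) ∧
    (∑ a : Fin N, ∑ b : Fin N,
        ((1 / 2 : ℂ) * ((∑ α : Fin k, star (z α a) ⬝ᵥ z α b) *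
            (∑ α : Fin k, star (z α b) ⬝ᵥ z α a)) -
          (1 / 4 : ℂ) * ((∑ α : Fin k, star (z α a) ⬝ᵥ z α a) *
            (∑ α : Fin k, star (z α b) ⬝ᵥ z α b)))) ≠ 0 := by
  have : Nontrivial (Fin k) := Fin.nontrivial_iff_two_le.mpr hk
  simp only [← normalDot_fin_two]
  exact no_go_coarse_graining_general hΛ hclosure
end
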